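/- Let k ≥ 1 and d ≥ 1 be integers. If a connected graph G (necessarily bipartite, with q ≥ 1 edges) admits a set-ordered graceful labeling, then G admits an edge-difference (k,d)-total coloring and an odd-edge edge-difference (k,d)-total coloring. -/

import Mathlib

/-- `(X, Y)` is a bipartition of the graph `G`: every vertex lies in exactly one of `X, Y`,
and every edge joins a vertex of `X` to a vertex of `Y`. -/
def IsBipartitionOf {V : Type} (G : SimpleGraph V) (X Y : Set V) : Prop :=
  (∀ v : V, v ∈ X ∨ v ∈ Y) ∧ Disjoint X Y ∧
    ∀ ⦃u v : V⦄, G.Adj u v → (u ∈ X ∧ v ∈ Y) ∨ (u ∈ Y ∧ v ∈ X)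

/-- The vertex/edge color membership constraints common to all `(k,d)`-total colorings:
colors of `X`-vertices are multiples of `d`, colors of `Y`-vertices and of edges lie in
`{k + jd : j ≥ 0}`. -/
def KDTotalVertexCond {V : Type} (G : SimpleGraph V) (X Y : Set V) (k d : ℕ)
    (fV : V → ℕ) (fE : Sym2 V → ℕ) : Prop :=
  (∀ x ∈ X, d ∣ fV x) ∧
  (∀ y ∈ Y, ∃ j : ℕ, fV y = k + j * d) ∧
  (∀ ⦃u v : V⦄, G.Adj u v → ∃ j : ℕ, fE s(u, v) = k + j * d)

/-- The set of colors used on the edges of `G`. -/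
def EdgeColorSet {V : Type} (G : SimpleGraph V) (fE : Sym2 V → ℕ) : Set ℕ :=
  {c : ℕ | ∃ u v : V, G.Adj u v ∧ fE s(u, v) = c}

/-- The set `{k + jd : 0 ≤ j ≤ q - 1}`. -/
def ArithProgSet (k d q : ℕ) : Set ℕ := {c : ℕ | ∃ j : ℕ, j < q ∧ c = k + j * d}

/-- The odd set `{k + (2j - 1)d : 1 ≤ j ≤ q}`. -/
def OddArithProgSet (k d q : ℕ) : Set ℕ :=
  {c : ℕ | ∃ j : ℕ, 1 ≤ j ∧ j ≤ q ∧ c = k + (2 * j - 1) * d}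

/-- A graceful `(k,d)`-total coloring of `G` (with bipartition `(X,Y)` and `q` edges). -/
def GracefulKDTotalColoring {V : Type} (G : SimpleGraph V) (X Y : Set V) (k d q : ℕ)
    (fV : V → ℕ) (fE : Sym2 V → ℕ) : Prop :=
  KDTotalVertexCond G X Y k d fV fE ∧
  (∀ ⦃u v : V⦄, G.Adj u v → fE s(u, v) = Nat.dist (fV u) (fV v)) ∧
  EdgeColorSet G fE = ArithProgSet k d q

/-- A harmonious `(k,d)`-total coloring of `G`:
`f(uv) - k ≡ f(u) + f(v) - k (mod qd)` for every edge `uv`. -/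
def HarmoniousKDTotalColoring {V : Type} (G : SimpleGraph V) (X Y : Set V) (k d q : ℕ)
    (fV : V → ℕ) (fE : Sym2 V → ℕ) : Prop :=
  KDTotalVertexCond G X Y k d fV fE ∧
  (∀ ⦃u v : V⦄, G.Adj u v →
    Int.ModEq ((q * d : ℕ) : ℤ) ((fE s(u, v) : ℤ) - (k : ℤ))
      (((fV u : ℤ) + (fV v : ℤ)) - (k : ℤ))) ∧
  EdgeColorSet G fE = ArithProgSet k d q

/-- An edge-magic `(k,d)`-total coloring: `f(u) + f(uv) + f(v)` is constant. -/
def EdgeMagicKDTotalColoring {V : Type} (G : SimpleGraph V) (X Y : Set V) (k d q : ℕ)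
    (fV : V → ℕ) (fE : Sym2 V → ℕ) : Prop :=
  KDTotalVertexCond G X Y k d fV fE ∧
  (∃ c : ℕ, ∀ ⦃u v : V⦄, G.Adj u v → fV u + fE s(u, v) + fV v = c) ∧
  EdgeColorSet G fE = ArithProgSet k d q

/-- An edge-difference `(k,d)`-total coloring: `f(uv) + |f(u) - f(v)|` is constant. -/
def EdgeDifferenceKDTotalColoring {V : Type} (G : SimpleGraph V) (X Y : Set V) (k d q : ℕ)
    (fV : V → ℕ) (fE : Sym2 V → ℕ) : Prop :=
  KDTotalVertexCond G X Y k d fV fE ∧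
  (∃ c : ℕ, ∀ ⦃u v : V⦄, G.Adj u v → fE s(u, v) + Nat.dist (fV u) (fV v) = c) ∧
  EdgeColorSet G fE = ArithProgSet k d q

/-- A graceful-difference `(k,d)`-total coloring: `||f(u) - f(v)| - f(uv)|` is constant. -/
def GracefulDifferenceKDTotalColoring {V : Type} (G : SimpleGraph V) (X Y : Set V) (k d q : ℕ)
    (fV : V → ℕ) (fE : Sym2 V → ℕ) : Prop :=
  KDTotalVertexCond G X Y k d fV fE ∧
  (∃ c : ℕ, ∀ ⦃u v : V⦄, G.Adj u v →
    ((Nat.dist (fV u) (fV v) : ℤ) - (fE s(u, v) : ℤ)).natAbs = c) ∧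
  EdgeColorSet G fE = ArithProgSet k d q

/-- A felicitous-difference `(k,d)`-total coloring: `|f(u) + f(v) - f(uv)|` is constant. -/
def FelicitousDifferenceKDTotalColoring {V : Type} (G : SimpleGraph V) (X Y : Set V) (k d q : ℕ)
    (fV : V → ℕ) (fE : Sym2 V → ℕ) : Prop :=
  KDTotalVertexCond G X Y k d fV fE ∧
  (∃ c : ℕ, ∀ ⦃u v : V⦄, G.Adj u v →
    (((fV u : ℤ) + (fV v : ℤ)) - (fE s(u, v) : ℤ)).natAbs = c) ∧
  EdgeColorSet G fE = ArithProgSet k d q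

/-- An edge-antimagic `(k,d)`-total coloring: the sums `f(u) + f(uv) + f(v)` over the edges
form the set `{2k + 2(a+j)d : 0 ≤ j ≤ q - 1}` for some `a ≥ 0`. -/
def EdgeAntimagicKDTotalColoring {V : Type} (G : SimpleGraph V) (X Y : Set V) (k d q : ℕ)
    (fV : V → ℕ) (fE : Sym2 V → ℕ) : Prop :=
  KDTotalVertexCond G X Y k d fV fE ∧
  ∃ a : ℕ, {c : ℕ | ∃ u v : V, G.Adj u v ∧ fV u + fE s(u, v) + fV v = c}
      = {c : ℕ | ∃ j : ℕ, j < q ∧ c = 2 * k + 2 * (a + j) * d}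

/-- An odd-edge graceful-difference `(k,d)`-total coloring. -/
def OddEdgeGracefulDifferenceKDTotalColoring {V : Type} (G : SimpleGraph V) (X Y : Set V)
    (k d q : ℕ) (fV : V → ℕ) (fE : Sym2 V → ℕ) : Prop :=
  KDTotalVertexCond G X Y k d fV fE ∧
  (∃ c : ℕ, ∀ ⦃u v : V⦄, G.Adj u v →
    ((Nat.dist (fV u) (fV v) : ℤ) - (fE s(u, v) : ℤ)).natAbs = c) ∧
  EdgeColorSet G fE = OddArithProgSet k d q

/-- An odd-edge edge-difference `(k,d)`-total coloring. -/
def OddEdgeEdgeDifferenceKDTotalColoring {V : Type} (G : SimpleGraph V) (X Y : Set V)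
    (k d q : ℕ) (fV : V → ℕ) (fE : Sym2 V → ℕ) : Prop :=
  KDTotalVertexCond G X Y k d fV fE ∧
  (∃ c : ℕ, ∀ ⦃u v : V⦄, G.Adj u v → fE s(u, v) + Nat.dist (fV u) (fV v) = c) ∧
  EdgeColorSet G fE = OddArithProgSet k d q

/-- An odd-edge edge-magic `(k,d)`-total coloring. -/
def OddEdgeEdgeMagicKDTotalColoring {V : Type} (G : SimpleGraph V) (X Y : Set V)
    (k d q : ℕ) (fV : V → ℕ) (fE : Sym2 V → ℕ) : Prop :=
  KDTotalVertexCond G X Y k d fV fE ∧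
  (∃ c : ℕ, ∀ ⦃u v : V⦄, G.Adj u v → fV u + fE s(u, v) + fV v = c) ∧
  EdgeColorSet G fE = OddArithProgSet k d q

/-- An odd-edge felicitous-difference `(k,d)`-total coloring. -/
def OddEdgeFelicitousDifferenceKDTotalColoring {V : Type} (G : SimpleGraph V) (X Y : Set V)
    (k d q : ℕ) (fV : V → ℕ) (fE : Sym2 V → ℕ) : Prop :=
  KDTotalVertexCond G X Y k d fV fE ∧
  (∃ c : ℕ, ∀ ⦃u v : V⦄, G.Adj u v →
    (((fV u : ℤ) + (fV v : ℤ)) - (fE s(u, v) : ℤ)).natAbs = c) ∧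
  EdgeColorSet G fE = OddArithProgSet k d q

/-- A set-ordered graceful labeling of `G` (with bipartition `(X,Y)` and `q` edges):
an injective map into `{0, …, q}` whose induced edge labels `|f(u) - f(v)|` are exactly
`{1, …, q}`, with `max f(X) < min f(Y)`. -/
def SetOrderedGracefulLabeling {V : Type} (G : SimpleGraph V) (X Y : Set V)
    (f : V → ℕ) (q : ℕ) : Prop :=
  Function.Injective f ∧ (∀ v : V, f v ≤ q) ∧
  (∀ x ∈ X, ∀ y ∈ Y, f x < f y) ∧
  {c : ℕ | ∃ u v : V, G.Adj u v ∧ Nat.dist (f u) (f v) = c} = Set.Icc 1 q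

/-!
The labels `t = |f(u) - f(v)|` of the edges run through `{1, …, q}`, so the complements `q - t` run
through `{0, …, q - 1}`. Since `f` is smaller on `X` than on `Y`, multiplying `f` by `md` and then
adding `k` on `Y` turns the difference `t` into `k + mtd`, and coloring the edge by
`k + (m(q - t) + r)d` makes the sum of the two equal to `2k + (mq + r)d`. The pairs
`(m, r) = (1, 0)` and `(2, 1)` give the two required sets of edge colors.
-/

section EdgeLabel

variable {V : Type} {G : SimpleGraph V}

/-- The edge labeling `uv ↦ |f(u) - f(v)|` induced by a vertex labeling `f`. -/
def inducedEdgeLabel (f : V → ℕ) : Sym2 V → ℕ :=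
  Sym2.lift ⟨fun u v => Nat.dist (f u) (f v), fun _ _ => Nat.dist_comm _ _⟩

theorem inducedEdgeLabel_mk (f : V → ℕ) (u v : V) :
    inducedEdgeLabel f s(u, v) = Nat.dist (f u) (f v) := rfl

theorem edgeColorSet_comp (g : ℕ → ℕ) (fE : Sym2 V → ℕ) :
    EdgeColorSet G (g ∘ fE) = g '' EdgeColorSet G fE := by
  ext c
  constructor
  · rintro ⟨u, v, huv, rfl⟩
    exact ⟨_, ⟨u, v, huv, rfl⟩, rfl⟩
  · rintro ⟨_, ⟨u, v, huv, rfl⟩, rfl⟩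
    exact ⟨u, v, huv, rfl⟩

end EdgeLabel

theorem image_sub_Icc_one (q : ℕ) : (fun t => q - t) '' Set.Icc 1 q = Set.Iio q := by
  ext j
  simp only [Set.mem_image, Set.mem_Icc, Set.mem_Iio]
  constructor
  · rintro ⟨t, ht, rfl⟩
    omega
  · intro hj
    exact ⟨q - j, by omega, Nat.sub_sub_self hj.le⟩

theorem arithProgSet_eq_image (k d q : ℕ) :
    ArithProgSet k d q = (fun j => k + j * d) '' Set.Iio q := by
  ext c
  simp only [ArithProgSet, Set.mem_ofPred_eq, Set.mem_image, Set.mem_Iio, eq_comm]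

theorem oddArithProgSet_eq_image (k d q : ℕ) :
    OddArithProgSet k d q = (fun j => k + (2 * j + 1) * d) '' Set.Iio q := by
  ext c
  constructor
  · rintro ⟨j, hj, hjq, rfl⟩
    obtain ⟨i, rfl⟩ := Nat.exists_eq_add_of_le' hj
    exact ⟨i, hjq, rfl⟩
  · rintro ⟨i, hi, rfl⟩
    exact ⟨i + 1, by omega, hi, rfl⟩

theorem dist_mul_add_mul_of_le {a b : ℕ} (hab : a ≤ b) (k n : ℕ) :
    Nat.dist (a * n) (k + b * n) = k + Nat.dist a b * n := by
  obtain ⟨t, rfl⟩ := Nat.exists_eq_add_of_le hab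
  have hshift : k + (a + t) * n = a * n + (k + t * n) := by ring
  rw [hshift, Nat.dist_eq_sub_of_le (Nat.le_add_right _ _), Nat.dist_eq_sub_of_le hab,
    Nat.add_sub_cancel_left, Nat.add_sub_cancel_left]

section Coloring

variable {V : Type} {G : SimpleGraph V} {X Y : Set V} {f : V → ℕ} {q : ℕ}

/-- The vertex part of the `(k,d)`-total colorings built from a labeling `f`: the color is
`m f(v) d` off `Y` and `k + m f(v) d` on `Y`, where `m` is the dilation factor of `f`. -/
noncomputable def dilatedVertexColor (Y : Set V) (f : V → ℕ) (k d m : ℕ) (v : V) : ℕ :=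
  Y.indicator (fun _ => k) v + m * f v * d

/-- The edge part of the `(k,d)`-total colorings built from a labeling `f` with edge labels in
`{1, …, q}`: an edge with label `t` gets the color `k + (m (q - t) + r) d`, where `m` is the
dilation factor used on the vertices and `r` is the index of the smallest color. -/
def complementEdgeColor (f : V → ℕ) (k d q m r : ℕ) : Sym2 V → ℕ :=
  (fun t => k + (m * (q - t) + r) * d) ∘ inducedEdgeLabel f

theorem complementEdgeColor_mk (f : V → ℕ) (k d q m r : ℕ) (u v : V) :
    complementEdgeColor f k d q m r s(u, v) =
      k + (m * (q - Nat.dist (f u) (f v)) + r) * d := rfl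

theorem dilatedVertexColor_of_mem {v : V} (hv : v ∈ Y) (f : V → ℕ) (k d m : ℕ) :
    dilatedVertexColor Y f k d m v = k + m * f v * d := by
  rw [dilatedVertexColor, Set.indicator_of_mem hv]

theorem dilatedVertexColor_of_notMem {v : V} (hv : v ∉ Y) (f : V → ℕ) (k d m : ℕ) :
    dilatedVertexColor Y f k d m v = m * f v * d := by
  rw [dilatedVertexColor, Set.indicator_of_notMem hv, zero_add]

theorem kdTotalVertexCond_dilated_complement (hXY : Disjoint X Y) (f : V → ℕ) (k d q m r : ℕ) :
    KDTotalVertexCond G X Y k d (dilatedVertexColor Y f k d m)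
      (complementEdgeColor f k d q m r) := by
  refine ⟨fun x hx => ?_, fun y hy => ⟨_, dilatedVertexColor_of_mem hy f k d m⟩,
    fun u v _ => ⟨_, complementEdgeColor_mk f k d q m r u v⟩⟩
  rw [dilatedVertexColor_of_notMem (hXY.notMem_of_mem_left hx)]
  exact Dvd.intro_left _ rfl

theorem dist_dilatedVertexColor {x y : V} (hx : x ∉ Y) (hy : y ∈ Y) (hxy : f x ≤ f y)
    (k d m : ℕ) :
    Nat.dist (dilatedVertexColor Y f k d m x) (dilatedVertexColor Y f k d m y) =
      k + m * Nat.dist (f x) (f y) * d := by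
  rw [dilatedVertexColor_of_notMem hx, dilatedVertexColor_of_mem hy,
    dist_mul_add_mul_of_le (Nat.mul_le_mul_left m hxy), Nat.dist_mul_left]

theorem dist_dilatedVertexColor_of_adj (hbip : IsBipartitionOf G X Y)
    (hle : ∀ x ∈ X, ∀ y ∈ Y, G.Adj x y → f x ≤ f y) (k d m : ℕ) {u v : V} (huv : G.Adj u v) :
    Nat.dist (dilatedVertexColor Y f k d m u) (dilatedVertexColor Y f k d m v) =
      k + m * Nat.dist (f u) (f v) * d := by
  obtain ⟨-, hXY, hcross⟩ := hbip
  rcases hcross huv with ⟨hu, hv⟩ | ⟨hu, hv⟩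
  · exact dist_dilatedVertexColor (hXY.notMem_of_mem_left hu) hv (hle u hu v hv huv) k d m
  · rw [Nat.dist_comm, Nat.dist_comm (f u)]
    exact dist_dilatedVertexColor (hXY.notMem_of_mem_left hv) hu (hle v hv u hu huv.symm) k d m

theorem complementEdgeColor_add_dist_dilatedVertexColor (hbip : IsBipartitionOf G X Y)
    (hle : ∀ x ∈ X, ∀ y ∈ Y, G.Adj x y → f x ≤ f y) (k d m r : ℕ) {u v : V} (huv : G.Adj u v)
    (hq : Nat.dist (f u) (f v) ≤ q) :
    complementEdgeColor f k d q m r s(u, v) +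
        Nat.dist (dilatedVertexColor Y f k d m u) (dilatedVertexColor Y f k d m v) =
      2 * k + (m * q + r) * d := by
  rw [complementEdgeColor_mk, dist_dilatedVertexColor_of_adj hbip hle k d m huv]
  generalize Nat.dist (f u) (f v) = t at hq ⊢
  calc k + (m * (q - t) + r) * d + (k + m * t * d)
      = 2 * k + (m * (q - t + t) + r) * d := by ring
    _ = 2 * k + (m * q + r) * d := by rw [Nat.sub_add_cancel hq]

theorem edgeColorSet_complementEdgeColor
    (hlabel : EdgeColorSet G (inducedEdgeLabel f) = Set.Icc 1 q) (k d m r : ℕ) :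
    EdgeColorSet G (complementEdgeColor f k d q m r) =
      (fun j => k + (m * j + r) * d) '' Set.Iio q := by
  rw [complementEdgeColor, edgeColorSet_comp, hlabel, ← image_sub_Icc_one q, Set.image_image]

end Coloring

theorem set_ordered_graceful_to_edge_difference_kd_general {V : Type} {G : SimpleGraph V}
    {X Y : Set V} {f : V → ℕ} {q : ℕ} (hbip : IsBipartitionOf G X Y)
    (hle : ∀ x ∈ X, ∀ y ∈ Y, G.Adj x y → f x ≤ f y)
    (hlabel : EdgeColorSet G (inducedEdgeLabel f) = Set.Icc 1 q) (k d : ℕ) :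
    (∃ (fV : V → ℕ) (fE : Sym2 V → ℕ), EdgeDifferenceKDTotalColoring G X Y k d q fV fE) ∧
    (∃ (fV : V → ℕ) (fE : Sym2 V → ℕ),
      OddEdgeEdgeDifferenceKDTotalColoring G X Y k d q fV fE) := by
  have hvertex (m r : ℕ) : KDTotalVertexCond G X Y k d (dilatedVertexColor Y f k d m)
      (complementEdgeColor f k d q m r) :=
    kdTotalVertexCond_dilated_complement hbip.2.1 f k d q m r
  have hdist {u v : V} (huv : G.Adj u v) : Nat.dist (f u) (f v) ≤ q :=
    (hlabel.subset ⟨u, v, huv, inducedEdgeLabel_mk f u v⟩).2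
  have hsum (m r : ℕ) : ∃ c, ∀ ⦃u v : V⦄, G.Adj u v → complementEdgeColor f k d q m r s(u, v) +
      Nat.dist (dilatedVertexColor Y f k d m u) (dilatedVertexColor Y f k d m v) = c :=
    ⟨_, fun _ _ huv =>
      complementEdgeColor_add_dist_dilatedVertexColor hbip hle k d m r huv (hdist huv)⟩
  refine ⟨⟨_, _, hvertex 1 0, hsum 1 0, ?_⟩, ⟨_, _, hvertex 2 1, hsum 2 1, ?_⟩⟩
  · simp only [edgeColorSet_complementEdgeColor hlabel, arithProgSet_eq_image, one_mul, add_zero]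
  · rw [edgeColorSet_complementEdgeColor hlabel, oddArithProgSet_eq_image]

/-- **STATEMENT.** If a connected (bipartite) graph admits a set-ordered graceful labeling,
then it admits the stated `(k,d)`-total coloring and its odd-edge variant. -/
theorem set_ordered_graceful_to_edge_difference_kd
    {V : Type} [Fintype V] [DecidableEq V]
    (G : SimpleGraph V) (X Y : Set V) (f : V → ℕ)
    (hconn : G.Connected) (hbip : IsBipartitionOf G X Y)
    (hq : 1 ≤ Nat.card G.edgeSet)
    (hsog : SetOrderedGracefulLabeling G X Y f (Nat.card G.edgeSet))
    (k d : ℕ) (hk : 1 ≤ k) (hd : 1 ≤ d) :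
    (∃ (X' Y' : Set V) (fV : V → ℕ) (fE : Sym2 V → ℕ),
        IsBipartitionOf G X' Y' ∧
        EdgeDifferenceKDTotalColoring G X' Y' k d (Nat.card G.edgeSet) fV fE) ∧
    (∃ (X' Y' : Set V) (fV : V → ℕ) (fE : Sym2 V → ℕ),
        IsBipartitionOf G X' Y' ∧
        OddEdgeEdgeDifferenceKDTotalColoring G X' Y' k d (Nat.card G.edgeSet) fV fE) := by
  obtain ⟨-, -, hlt, hlabel⟩ := hsog
  obtain ⟨⟨fV, fE, h⟩, ⟨fV', fE', h'⟩⟩ := set_ordered_graceful_to_edge_difference_kd_general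
    hbip (fun x hx y hy _ => (hlt x hx y hy).le) hlabel k d
  exact ⟨⟨X, Y, fV, fE, hbip, h⟩, ⟨X, Y, fV', fE', hbip, h'⟩⟩
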